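/- Let P(z,ε) = Σ_{j=0}^d a_j(ε)·z^j, where each a_j(ε) is a polynomial in ε with complex coefficients and a_d(0) ≠ 0. Let λ₀ be a root of P(·,0) of multiplicity s > 1, and assume there is σ₀ > 0 such that for all ε with 0 < |ε| < σ₀ every root of P(·,ε) is simple. Then there exist δ > 0, σ ∈ (0,σ₀], an integer r ≥ 1, positive integers H₁, …, H_r with H₁ + ⋯ + H_r = s, and functions g₁, …, g_r, each analytic on a neighborhood of 0 in ℂ with g_i(0) = λ₀, such that for every ε with 0 < |ε| < σ the set of roots of P(·,ε) lying in the disk {z : |z − λ₀| < δ} is exactly the union over i = 1, …, r of { g_i(ζ) : ζ ∈ ℂ, ζ^{H_i} = ε }, and this union consists of exactly s distinct points. (Theorem 3.4: near a zero of multiplicity s > 1 the zeros are branches of global analytic functions given by Puiseux series in ε^{1/H_i}, with cycle lengths summing to s.) -/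

import Mathlib

/-!
Substituting `ε = exp (2πiw)` replaces a punctured disk around `0` by a half plane. The half plane
is simply connected and all roots of `P(·, ε)` are simple, so the roots form globally defined
holomorphic sheets `Φ k` of `w`. The translation `w ↦ w + 1` does not change `ε`, hence permutes
the sheets. A sheet in a cycle of length `H` of this permutation has period `H`, and it is bounded
because the roots are, so it is an analytic function of `ζ = exp (2πiw/H)`, across `ζ = 0`; here
`ζ ^ H = ε`, and the other sheets of the cycle arise from the other choices of `ζ`. In particular
every sheet has a limit as `ε → 0`, and passing to the limit in the factorization of `P(·, ε)`
shows that exactly `s` of these limits are `λ₀`. A translate of a sheet has the same limit, so the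
sheets tending to `λ₀` are a union of cycles.
-/

open Filter Topology Polynomial Set Function.Periodic

local notation "I∞" => comap Complex.im atTop

section Sheets

variable {X Y ι : Type*} [TopologicalSpace X] [TopologicalSpace Y]

/-- The functions `ψ i` are the sheets over `S` of the multivalued function `R`: they are continuous
on `S`, and their values at each `x ∈ S` enumerate `R x` without repetition. -/
structure IsSheetsOn (ψ : ι → X → Y) (R : X → Set Y) (S : Set X) : Prop where
  continuousOn : ∀ i, ContinuousOn (ψ i) S
  injective : ∀ x ∈ S, Function.Injective (ψ · x)
  range_eq : ∀ x ∈ S, range (ψ · x) = R x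

/-- The graph of a multivalued function, the total space of the covering formed by its sheets. -/
abbrev MultivaluedGraph (R : X → Set Y) : Type _ := {p : X × Y // p.2 ∈ R p.1}

namespace IsSheetsOn

variable {ψ : ι → X → Y} {R : X → Set Y} {S T : Set X} {x : X}

lemma mono (h : IsSheetsOn ψ R S) (hTS : T ⊆ S) : IsSheetsOn ψ R T where
  continuousOn i := (h.continuousOn i).mono hTS
  injective x hx := h.injective x (hTS hx)
  range_eq x hx := h.range_eq x (hTS hx)

lemma apply_mem (h : IsSheetsOn ψ R S) (hx : x ∈ S) (i : ι) : ψ i x ∈ R x :=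
  h.range_eq x hx ▸ mem_range_self i

lemma exists_apply_eq (h : IsSheetsOn ψ R S) (hx : x ∈ S) {y : Y} (hy : y ∈ R x) :
    ∃ i, ψ i x = y := by
  rwa [← h.range_eq x hx] at hy

lemma ncard_eq (h : IsSheetsOn ψ R S) (hx : x ∈ S) : (R x).ncard = Nat.card ι := by
  rw [← h.range_eq x hx, ← image_univ, ncard_image_of_injective _ (h.injective x hx), ncard_univ]

lemma subtype (h : IsSheetsOn ψ R S) {p : ι → Prop} {q : Y → Prop}
    (hpq : ∀ x ∈ S, ∀ i, q (ψ i x) ↔ p i) :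
    IsSheetsOn (fun i : {i // p i} ↦ ψ i) (fun x ↦ {y | y ∈ R x ∧ q y}) S where
  continuousOn i := h.continuousOn i
  injective x hx := (h.injective x hx).comp Subtype.val_injective
  range_eq x hx := by
    ext y
    rw [mem_ofPred_eq, ← h.range_eq x hx]
    constructor
    · rintro ⟨i, rfl⟩
      exact ⟨⟨i, rfl⟩, (hpq x hx i).2 i.2⟩
    · rintro ⟨⟨i, rfl⟩, hi⟩
      exact ⟨⟨i, (hpq x hx i).1 hi⟩, rfl⟩

variable [T2Space Y] [Finite ι]

lemma isLocallyConstant_index (h : IsSheetsOn ψ R S) {A : Type*} [TopologicalSpace A]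
    {f : A → X} {g : A → Y} {c : A → ι} (hf : Continuous f) (hfS : ∀ a, f a ∈ S)
    (hg : Continuous g) (hc : ∀ a, ψ (c a) (f a) = g a) : IsLocallyConstant c := by
  rw [IsLocallyConstant.iff_eventually_eq]
  intro a
  have hne : ∀ j, ∀ᶠ b in 𝓝 a, j ≠ c a → ψ j (f b) ≠ g b := fun j ↦ by
    rcases eq_or_ne j (c a) with hj | hj
    · simp [hj]
    · have hja : ψ j (f a) ≠ g a := fun hja ↦ hj (h.injective _ (hfS a) (hja.trans (hc a).symm))
      have hψ : Continuous fun b ↦ ψ j (f b) := (h.continuousOn j).comp_continuous hf hfS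
      filter_upwards [(hψ.continuousAt.ne_iff_eventually_ne hg.continuousAt).1 hja] with b hb _
        using hb
  filter_upwards [eventually_all.2 hne] with b hb
  by_contra hcb
  exact hb (c b) hcb (hc b)

lemma exists_eqOn (h : IsSheetsOn ψ R S) (hS : IsPreconnected S) (hne : S.Nonempty) {f : X → Y}
    (hf : ContinuousOn f S) (hfR : ∀ x ∈ S, f x ∈ R x) : ∃ i, EqOn (ψ i) f S := by
  have : PreconnectedSpace S := isPreconnected_iff_preconnectedSpace.1 hS
  obtain ⟨x₀, hx₀⟩ := hne
  choose c hc using fun x : S ↦ h.exists_apply_eq x.2 (hfR x x.2)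
  have hconst : IsLocallyConstant c :=
    h.isLocallyConstant_index continuous_subtype_val (fun x ↦ x.2) hf.domRestrict hc
  refine ⟨c ⟨x₀, hx₀⟩, fun x hx ↦ ?_⟩
  rw [hconst.apply_eq_of_preconnectedSpace ⟨x₀, hx₀⟩ ⟨x, hx⟩]
  exact hc ⟨x, hx⟩

lemma exists_perm (h : IsSheetsOn ψ R S) (hS : IsPreconnected S) (hne : S.Nonempty) {f : X → X}
    (hf : ContinuousOn f S) (hfS : MapsTo f S S) (hfR : ∀ x ∈ S, R (f x) = R x) :
    ∃ π : Equiv.Perm ι, ∀ i, ∀ x ∈ S, ψ i (f x) = ψ (π i) x := by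
  have hsheet : ∀ i, ∃ j, EqOn (ψ j) (ψ i ∘ f) S := fun i ↦
    h.exists_eqOn hS hne ((h.continuousOn i).comp hf hfS) fun x hx ↦
      hfR x hx ▸ h.apply_mem (hfS hx) i
  choose π hπ using hsheet
  obtain ⟨x, hx⟩ := hne
  have hinj : Function.Injective π := fun i j hij ↦
    h.injective _ (hfS hx) ((hπ i hx).symm.trans (hij ▸ hπ j hx))
  exact ⟨Equiv.ofBijective π (Finite.injective_iff_bijective.1 hinj), fun i x hx ↦ (hπ i hx).symm⟩

lemma isEvenlyCovered [TopologicalSpace ι] [DiscreteTopology ι] (h : IsSheetsOn ψ R S)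
    (hS : IsOpen S) (hx : x ∈ S) : IsEvenlyCovered (fun e : MultivaluedGraph R ↦ e.1.1) x ι := by
  let p : MultivaluedGraph R → X := fun e ↦ e.1.1
  have hp : Continuous p := by fun_prop
  choose c hc using fun e : p ⁻¹' S ↦ h.exists_apply_eq e.2 e.1.2
  have hcc : Continuous c :=
    (h.isLocallyConstant_index (f := fun e : p ⁻¹' S ↦ e.1.1.1) (g := fun e ↦ e.1.1.2)
      (by fun_prop) (fun e ↦ e.2) (by fun_prop) hc).continuous
  let toGraph : S × ι → p ⁻¹' S := fun q ↦ ⟨⟨(q.1, ψ q.2 q.1), h.apply_mem q.1.2 q.2⟩, q.1.2⟩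
  have hψ : Continuous fun q : S × ι ↦ ψ q.2 q.1 :=
    continuous_prod_of_discrete_right.2 fun i ↦ (h.continuousOn i).domRestrict
  have htoGraph : Continuous toGraph :=
    .subtype_mk (.subtype_mk ((by fun_prop : Continuous fun q : S × ι ↦ (q.1 : X)).prodMk hψ) _) _
  let H : p ⁻¹' S ≃ₜ S × ι :=
    { toFun e := (⟨e.1.1.1, e.2⟩, c e)
      invFun := toGraph
      left_inv e := Subtype.ext (Subtype.ext (Prod.ext rfl (hc e)))
      right_inv q := Prod.ext rfl (h.injective _ q.1.2 (hc (toGraph q)))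
      continuous_toFun := by fun_prop
      continuous_invFun := htoGraph }
  exact ⟨inferInstance, S, hx, hS, hS.preimage hp, H, fun _ ↦ rfl⟩

end IsSheetsOn

section Monodromy

variable [T2Space Y] [Finite ι] {R : X → Set Y} {S : Set X}

lemma isCoveringMapOn_of_isSheetsOn_nhds
    (hloc : ∀ x ∈ S, ∃ U ∈ 𝓝 x, ∃ ψ : ι → X → Y, IsSheetsOn ψ R U) :
    IsCoveringMapOn (fun e : MultivaluedGraph R ↦ e.1.1) S := by
  intro x hx
  obtain ⟨U, hU, ψ, hψ⟩ := hloc x hx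
  let _ : TopologicalSpace ι := ⊥
  have : DiscreteTopology ι := ⟨rfl⟩
  exact ((hψ.mono interior_subset).isEvenlyCovered isOpen_interior
    (mem_interior_iff_mem_nhds.2 hU)).to_isEvenlyCovered_preimage

variable [SimplyConnectedSpace S] [LocallyPathConnectedSpace S]

lemma existsUnique_selection_of_isSheetsOn_nhds
    (hloc : ∀ x ∈ S, ∃ U ∈ 𝓝 x, ∃ ψ : ι → X → Y, IsSheetsOn ψ R U) (x : S) {y : Y}
    (hy : y ∈ R x) : ∃! f : C(S, Y), f x = y ∧ ∀ t : S, f t ∈ R t := by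
  obtain ⟨F, ⟨hFx, hF⟩, hFuniq⟩ :=
    (isCoveringMapOn_of_isSheetsOn_nhds hloc).existsUnique_continuousMap_lifts
      ⟨Subtype.val, continuous_subtype_val⟩ (a₀ := x) (e₀ := ⟨(x, y), hy⟩) rfl fun t ↦ t.2
  have hfst : ∀ t, (F t).1.1 = t := congrFun hF
  refine ⟨⟨fun t ↦ (F t).1.2, by fun_prop⟩, ⟨by simp [hFx], fun t ↦ ?_⟩, fun f ⟨hfx, hf⟩ ↦ ?_⟩
  · exact hfst t ▸ (F t).2
  · have hfF : ⟨fun t ↦ ⟨(t, f t), hf t⟩, by fun_prop⟩ = F :=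
      hFuniq _ ⟨Subtype.ext (Prod.ext rfl hfx), rfl⟩
    subst hfF
    rfl

lemma exists_isSheetsOn_of_isSheetsOn_nhds [Nonempty Y]
    (hloc : ∀ x ∈ S, ∃ U ∈ 𝓝 x, ∃ ψ : ι → X → Y, IsSheetsOn ψ R U) :
    ∃ ψ : ι → X → Y, IsSheetsOn ψ R S := by
  obtain ⟨x₀⟩ : Nonempty S := inferInstance
  obtain ⟨U, hU, φ, hφ⟩ := hloc x₀ x₀.2
  have hx₀ := mem_of_mem_nhds hU
  choose f hf hfuniq using fun i ↦
    existsUnique_selection_of_isSheetsOn_nhds hloc x₀ (hφ.apply_mem hx₀ i)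
  let ψ i := Function.extend Subtype.val (f i) (Function.const X (Classical.arbitrary Y))
  have hψ : ∀ i (x : S), ψ i x = f i x := fun i x ↦ Subtype.val_injective.extend_apply _ _ x
  refine ⟨ψ, fun i ↦ ?_, fun x hx i j hij ↦ ?_, fun x hx ↦ subset_antisymm ?_ fun y hy ↦ ?_⟩
  · rw [continuousOn_iff_continuous_domRestrict]
    exact (f i).continuous.congr fun x ↦ (hψ i x).symm
  · have hfij : f j ⟨x, hx⟩ = f i ⟨x, hx⟩ := by simpa only [← hψ] using hij.symm
    have huniq := existsUnique_selection_of_isSheetsOn_nhds hloc ⟨x, hx⟩ ((hf i).2 ⟨x, hx⟩)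
    have hfeq : f i = f j := huniq.unique ⟨rfl, (hf i).2⟩ ⟨hfij, (hf j).2⟩
    exact hφ.injective x₀ hx₀ ((hf i).1.symm.trans (hfeq ▸ (hf j).1))
  · rintro - ⟨i, rfl⟩
    change ψ i x ∈ R x
    rw [hψ i ⟨x, hx⟩]
    exact (hf i).2 ⟨x, hx⟩
  · obtain ⟨F, ⟨hFx, hF⟩, -⟩ := existsUnique_selection_of_isSheetsOn_nhds hloc ⟨x, hx⟩ hy
    obtain ⟨i, hi⟩ := hφ.exists_apply_eq hx₀ (hF x₀)
    refine ⟨i, (hψ i ⟨x, hx⟩).trans ?_⟩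
    rw [← hfuniq i F ⟨hi.symm, hF⟩, hFx]

end Monodromy

end Sheets

section Roots

lemma separable_of_forall_isRoot {K : Type*} [Field K] [IsAlgClosed K] {p : K[X]}
    (hp : ∀ z, p.IsRoot z → ¬p.derivative.IsRoot z) : p.Separable := by
  rw [separable_def, isCoprime_iff_aeval_ne_zero_of_isAlgClosed K K]
  exact fun z ↦ not_and_or.1 fun h ↦ hp z (by simpa using h.1) (by simpa using h.2)

lemma exists_injective_isRoot {K : Type*} [Field K] [IsAlgClosed K] {p : K[X]} {d : ℕ}
    (hp : p.Separable) (hd : p.degree = d) :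
    ∃ ρ : Fin d → K, Function.Injective ρ ∧ ∀ k, p.IsRoot (ρ k) := by
  classical
  have hcard : p.roots.toFinset.card = d := by
    rw [Multiset.toFinset_card_of_nodup (nodup_roots hp),
      IsAlgClosed.card_roots_eq_natDegree, natDegree_eq_of_degree_eq_some hd]
  let e := p.roots.toFinset.equivFinOfCardEq hcard
  exact ⟨fun k ↦ e.symm k, Subtype.val_injective.comp e.symm.injective,
    fun k ↦ isRoot_of_mem_roots (Multiset.mem_toFinset.1 (e.symm k).2)⟩

lemma roots_eq_map_of_injective {R ι : Type*} [CommRing R] [IsDomain R] [Fintype ι] {p : R[X]}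
    {ρ : ι → R} (hρ : Function.Injective ρ) (hroot : ∀ k, p.IsRoot (ρ k))
    (hd : p.degree = Fintype.card ι) : p.roots = Finset.univ.val.map ρ := by
  have hp : p ≠ 0 := by
    rintro rfl
    simp at hd
  refine roots_eq_of_degree_le_card_of_ne_zero (S := Finset.univ.map ⟨ρ, hρ⟩) ?_ ?_ hp
  · simpa using hroot
  · simp [hd]

end Roots

section Family

lemma exists_implicitFunction {𝕜 E : Type*} [RCLike 𝕜] [NormedAddCommGroup E] [NormedSpace 𝕜 E]
    [CompleteSpace E] {F : E × 𝕜 → 𝕜} {u : E × 𝕜} {D : 𝕜} (hF : ContDiffAt 𝕜 1 F u)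
    (hD : HasDerivAt (fun z ↦ F (u.1, z)) D u.2) (hD0 : D ≠ 0) :
    ∃ ψ : E → 𝕜, ψ u.1 = u.2 ∧ ContDiffAt 𝕜 1 ψ u.1 ∧ (∀ᶠ x in 𝓝 u.1, F (x, ψ x) = F u) ∧
      ∀ᶠ v in 𝓝 u, F v = F u → ψ v.1 = v.2 := by
  have hpartial : HasFDerivAt (fun z ↦ F (u.1, z)) (fderiv 𝕜 F u ∘L .inr 𝕜 E 𝕜) u.2 :=
    (hF.differentiableAt one_ne_zero).hasFDerivAt.comp u.2 (hasFDerivAt_prodMk_right u.1 u.2)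
  have hinv : (fderiv 𝕜 F u ∘L .inr 𝕜 E 𝕜).IsInvertible := by
    rw [hpartial.unique hD.hasFDerivAt]
    exact ⟨ContinuousLinearEquiv.unitsEquivAut 𝕜 (Units.mk0 D hD0), by ext; simp⟩
  exact ⟨hF.implicitFunction one_ne_zero hinv, hF.implicitFunction_apply_self one_ne_zero hinv,
    hF.contDiffAt_implicitFunction one_ne_zero hinv,
    hF.eventually_apply_implicitFunction one_ne_zero hinv,
    (hF.eventually_apply_eq_iff_implicitFunction one_ne_zero hinv).mono fun _ ↦ Iff.mp⟩

variable {E : Type*} [NormedAddCommGroup E] [NormedSpace ℂ E]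

/-- Near `w`, the polynomial `P x` has exact degree `d`, and its coefficients depend analytically
on `x`. -/
structure IsAnalyticFamilyAt (P : E → ℂ[X]) (d : ℕ) (w : E) : Prop where
  analyticAt_coeff : ∀ n, AnalyticAt ℂ (fun x ↦ (P x).coeff n) w
  eventually_degree_eq : ∀ᶠ x in 𝓝 w, (P x).degree = d

namespace IsAnalyticFamilyAt

variable {P : E → ℂ[X]} {d : ℕ} {w : E}

lemma of_eq_sum {a : ℕ → E → ℂ} (hP : ∀ x, P x = ∑ j ∈ Finset.range (d + 1), C (a j x) * X ^ j)
    (ha : ∀ j ≤ d, AnalyticAt ℂ (a j) w) (had : a d w ≠ 0) : IsAnalyticFamilyAt P d w := by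
  have hcoeff : ∀ x n, (P x).coeff n = if n < d + 1 then a n x else 0 := fun x n ↦ by
    simp [hP, finsetSum_coeff, coeff_C_mul, coeff_X_pow]
  refine ⟨fun n ↦ ?_, ?_⟩
  · by_cases hn : n < d + 1
    · simpa only [hcoeff, if_pos hn] using ha n (Nat.lt_succ_iff.1 hn)
    · simpa only [hcoeff, if_neg hn] using analyticAt_const
  · filter_upwards [(ha d le_rfl).continuousAt.eventually_ne had] with x hx
    refine degree_eq_of_le_of_coeff_ne_zero ((degree_le_iff_coeff_zero _ _).2 fun n hn ↦ ?_) ?_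
    · rw [hcoeff, if_neg (by simpa [Nat.succ_le_iff] using hn)]
    · rwa [hcoeff, if_pos d.lt_succ_self]

lemma degree_eq (h : IsAnalyticFamilyAt P d w) : (P w).degree = d :=
  h.eventually_degree_eq.self_of_nhds

lemma comp {E' : Type*} [NormedAddCommGroup E'] [NormedSpace ℂ E'] {f : E' → E} {v : E'}
    (h : IsAnalyticFamilyAt P d (f v)) (hf : AnalyticAt ℂ f v) :
    IsAnalyticFamilyAt (fun x ↦ P (f x)) d v where
  analyticAt_coeff n := (h.analyticAt_coeff n).comp hf
  eventually_degree_eq := hf.continuousAt.eventually h.eventually_degree_eq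

lemma eventually (h : IsAnalyticFamilyAt P d w) : ∀ᶠ x in 𝓝 w, IsAnalyticFamilyAt P d x := by
  have hlow : ∀ᶠ x in 𝓝 w, ∀ n ≤ d, AnalyticAt ℂ (fun y ↦ (P y).coeff n) x :=
    (eventually_all_finite (finite_Iic d)).2 fun n _ ↦ (h.analyticAt_coeff n).eventually_analyticAt
  filter_upwards [hlow, h.eventually_degree_eq.eventually_nhds] with x hx hdeg
  refine ⟨fun n ↦ (le_or_gt n d).elim (hx n) fun hn ↦ ?_, hdeg⟩
  have hzero : (fun y ↦ (P y).coeff n) =ᶠ[𝓝 x] fun _ ↦ 0 := by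
    filter_upwards [hdeg] with y hy
    exact coeff_eq_zero_of_degree_lt (hy ▸ Nat.cast_lt.2 hn)
  exact analyticAt_const.congr hzero.symm

lemma analyticAt_eval (h : IsAnalyticFamilyAt P d w) (z : ℂ) :
    AnalyticAt ℂ (fun v : E × ℂ ↦ (P v.1).eval v.2) (w, z) := by
  have hsum : AnalyticAt ℂ (fun v : E × ℂ ↦ ∑ n ∈ Finset.range (d + 1), (P v.1).coeff n * v.2 ^ n)
      (w, z) :=
    Finset.analyticAt_fun_sum _ fun n _ ↦
      ((h.analyticAt_coeff n).comp_of_eq analyticAt_fst rfl).mul (analyticAt_snd.pow n)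
  refine hsum.congr ?_
  filter_upwards [continuousAt_fst.eventually h.eventually_degree_eq] with v hv
  rw [eval_eq_sum_range' (Nat.lt_succ_of_le (natDegree_eq_of_degree_eq_some hv).le)]

lemma exists_norm_root_le (h : IsAnalyticFamilyAt P d w) :
    ∃ B, ∀ᶠ x in 𝓝 w, ∀ z, (P x).IsRoot z → ‖z‖ ≤ B := by
  let b x := (Finset.range d).sup (fun n ↦ ‖(P x).coeff n‖₊) / ‖(P x).coeff d‖₊ + 1
  have hlead : (P w).coeff d ≠ 0 := coeff_ne_zero_of_eq_degree h.degree_eq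
  have hcoeff n : ContinuousAt (fun x ↦ ‖(P x).coeff n‖₊) w :=
    (h.analyticAt_coeff n).continuousAt.nnnorm
  have hb : ContinuousAt b w :=
    ((ContinuousAt.finset_sup_apply fun n _ ↦ hcoeff n).div₀ (hcoeff d)
      (nnnorm_ne_zero_iff.2 hlead)).add continuousAt_const
  refine ⟨(b w + 1 : NNReal), ?_⟩
  filter_upwards [hb.eventually_lt_const (lt_add_one _), h.eventually_degree_eq]
    with x hx hdeg z hz
  have hne : P x ≠ 0 := ne_zero_of_degree_gt (n := ⊥) (by simp [hdeg])
  have hcauchy : cauchyBound (P x) = b x := by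
    rw [cauchyBound, leadingCoeff, natDegree_eq_of_degree_eq_some hdeg]
  exact NNReal.coe_le_coe.2 ((hcauchy ▸ (hz.norm_lt_cauchyBound hne).le).trans hx.le)

lemma roots_eq_of_tendsto {α ι : Type*} [Fintype ι] {l : Filter α} [l.NeBot] {u : α → E}
    {Φ : ι → α → ℂ} {c : ι → ℂ} (h : IsAnalyticFamilyAt P d w) (hu : Tendsto u l (𝓝 w))
    (hΦ : ∀ᶠ x in l, (P (u x)).roots = Finset.univ.val.map (Φ · x))
    (hc : ∀ k, Tendsto (Φ k) l (𝓝 (c k))) : (P w).roots = Finset.univ.val.map c := by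
  have heval z : Tendsto (fun x ↦ (P (u x)).eval z) l (𝓝 ((P w).eval z)) :=
    (h.analyticAt_eval z).continuousAt.tendsto.comp (hu.prodMk_nhds tendsto_const_nhds)
  have hprod z : Tendsto (fun x ↦ (P (u x)).coeff d * ∏ k, (z - Φ k x)) l
      (𝓝 ((P w).coeff d * ∏ k, (z - c k))) :=
    ((h.analyticAt_coeff d).continuousAt.tendsto.comp hu).mul
      (tendsto_finsetProd _ fun k _ ↦ (hc k).const_sub z)
  have hfactor z : ∀ᶠ x in l, (P (u x)).eval z = (P (u x)).coeff d * ∏ k, (z - Φ k x) := by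
    filter_upwards [hΦ, hu.eventually h.eventually_degree_eq] with x hx hdeg
    conv_lhs => rw [(IsAlgClosed.splits (P (u x))).eq_prod_roots, hx, leadingCoeff,
      natDegree_eq_of_degree_eq_some hdeg]
    simp [eval_prod]
  have hP : P w = C ((P w).coeff d) * (Finset.univ.val.map fun k ↦ X - C (c k)).prod :=
    funext fun z ↦ by
      rw [tendsto_nhds_unique ((heval z).congr' (hfactor z)) (hprod z)]
      simp [eval_prod]
  rw [hP, roots_C_mul _ (coeff_ne_zero_of_eq_degree h.degree_eq)]
  simpa using roots_multiset_prod_X_sub_C (Finset.univ.val.map c)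

variable [CompleteSpace E]

lemma exists_implicit_root (h : IsAnalyticFamilyAt P d w) (hsep : (P w).Separable) {z : ℂ}
    (hz : (P w).IsRoot z) :
    ∃ ψ : E → ℂ, ψ w = z ∧ ContDiffAt ℂ 1 ψ w ∧ (∀ᶠ x in 𝓝 w, (P x).IsRoot (ψ x)) ∧
      ∀ᶠ v in 𝓝 (w, z), (P v.1).IsRoot v.2 → ψ v.1 = v.2 := by
  have hD : (P w).derivative.eval z ≠ 0 := hsep.eval₂_derivative_ne_zero (RingHom.id ℂ) hz
  simpa only [IsRoot.def, hz.eq_zero] using exists_implicitFunction (h.analyticAt_eval z).contDiffAt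
    ((P w).hasDerivAt z) hD

lemma exists_isSheetsOn_nhds (h : IsAnalyticFamilyAt P d w) (hsep : (P w).Separable) :
    ∃ U ∈ 𝓝 w, ∃ ψ : Fin d → E → ℂ, IsSheetsOn ψ (fun x ↦ {z | (P x).IsRoot z}) U := by
  obtain ⟨ρ, hρ, hroot⟩ := exists_injective_isRoot hsep h.degree_eq
  choose ψ hψw hψdiff hψroot _ using fun k ↦ h.exists_implicit_root hsep (hroot k)
  have hcont : ∀ᶠ x in 𝓝 w, ∀ k, ContinuousAt (ψ k) x := eventually_all.2 fun k ↦
    ((hψdiff k).eventually (by simp)).mono fun x hx ↦ hx.continuousAt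
  have hinj : ∀ᶠ x in 𝓝 w, ∀ k l, k ≠ l → ψ k x ≠ ψ l x :=
    eventually_all.2 fun k ↦ eventually_all.2 fun l ↦ eventually_imp_distrib_left.2 fun hkl ↦
      ((hψdiff k).continuousAt.ne_iff_eventually_ne (hψdiff l).continuousAt).1
        (by simpa only [hψw] using hρ.ne hkl)
  refine ⟨_, hcont.and (hinj.and ((eventually_all.2 hψroot).and h.eventually_degree_eq)), ψ,
    fun k x hx ↦ (hx.1 k).continuousWithinAt, fun x hx k l ↦ not_imp_not.1 (hx.2.1 k l),
    fun x ⟨_, hne, hx, hdeg⟩ ↦ ?_⟩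
  have hroots : (P x).roots = Finset.univ.val.map (ψ · x) :=
    roots_eq_map_of_injective (fun k l ↦ not_imp_not.1 (hne k l)) hx (by simpa using hdeg)
  have hPx : P x ≠ 0 := ne_zero_of_degree_gt (n := ⊥) (by simp [hdeg])
  ext z
  rw [mem_ofPred_eq, ← mem_roots hPx, hroots]
  simp

lemma differentiableAt_of_isRoot (h : IsAnalyticFamilyAt P d w) (hsep : (P w).Separable)
    {f : E → ℂ} (hf : ContinuousAt f w) (hroot : ∀ᶠ x in 𝓝 w, (P x).IsRoot (f x)) :
    DifferentiableAt ℂ f w := by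
  obtain ⟨ψ, -, hψdiff, -, hψuniq⟩ := h.exists_implicit_root hsep hroot.self_of_nhds
  refine (hψdiff.differentiableAt one_ne_zero).congr_of_eventuallyEq ?_
  filter_upwards [(continuousAt_id.prodMk hf).eventually hψuniq, hroot] with x hx hfx
  exact (hx hfx).symm

lemma exists_differentiable_sheets {S : Set E} [SimplyConnectedSpace S] (hS : IsOpen S)
    (h : ∀ x ∈ S, IsAnalyticFamilyAt P d x) (hsep : ∀ x ∈ S, (P x).Separable) :
    ∃ Φ : Fin d → E → ℂ, IsSheetsOn Φ (fun x ↦ {z | (P x).IsRoot z}) S ∧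
      ∀ k, ∀ x ∈ S, DifferentiableAt ℂ (Φ k) x := by
  let _ : NormedSpace ℝ E := .restrictScalars ℝ ℂ E
  have : LocallyPathConnectedSpace S := hS.locallyPathConnectedSpace
  obtain ⟨Φ, hΦ⟩ := exists_isSheetsOn_of_isSheetsOn_nhds fun x hx ↦
    (h x hx).exists_isSheetsOn_nhds (hsep x hx)
  refine ⟨Φ, hΦ, fun k x hx ↦ ?_⟩
  have hxS : S ∈ 𝓝 x := hS.mem_nhds hx
  exact (h x hx).differentiableAt_of_isRoot (hsep x hx) ((hΦ.continuousOn k).continuousAt hxS)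
    (by filter_upwards [hxS] with y hy using hΦ.apply_mem hy k)

end IsAnalyticFamilyAt

end Family

lemma exists_cycle_representatives {α : Type*} [Finite α] (π : Equiv.Perm α) :
    ∃ (r : ℕ) (rep : Fin r → α) (H : Fin r → ℕ), (∀ i, 0 < H i) ∧ ∑ i, H i = Nat.card α ∧
      (∀ i, (π ^ H i) (rep i) = rep i) ∧ ∀ k, ∃ i, ∃ m : ℤ, (π ^ m) (rep i) = k := by
  classical
  have := Fintype.ofFinite α
  let G := Subgroup.zpowers π
  let _ : Setoid α := MulAction.orbitRel G α
  let e := Fintype.equivFin (MulAction.orbitRel.Quotient G α)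
  let rep i := (e.symm i).out
  have hcard (k : α) : Function.minimalPeriod (π • ·) k = Fintype.card (MulAction.orbit G k) :=
    MulAction.minimalPeriod_eq_card (a := π) (b := k)
  refine ⟨_, rep, fun i ↦ Fintype.card (MulAction.orbit G (rep i)), fun i ↦ ?_, ?_, fun i ↦ ?_,
    fun k ↦ ?_⟩
  · exact Fintype.card_pos_iff.2 ⟨⟨_, MulAction.mem_orbit_self _⟩⟩
  · rw [Nat.card_eq_fintype_card, Fintype.card_congr (MulAction.selfEquivSigmaOrbits G α),
      Fintype.card_sigma, ← e.symm.sum_comp]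
  · exact MulAction.pow_smul_eq_iff_minimalPeriod_dvd.2 (hcard _).dvd
  · obtain ⟨⟨_, m, rfl⟩, hm⟩ : k ∈ MulAction.orbit G (rep (e ⟦k⟧)) := by
      simp only [rep, Equiv.symm_apply_apply]
      exact Setoid.symm (Quotient.mk_out k)
    exact ⟨_, m, hm⟩

section QParam

/-- The half plane of all `w` with `‖exp (2πiw)‖ < σ`, the universal cover of the punctured disk of
radius `σ` by `qParam 1`. -/
def qHalfPlane (σ : ℝ) : Set ℂ := {w | ‖qParam 1 w‖ < σ}

variable {σ : ℝ} {w : ℂ}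

lemma isOpen_qHalfPlane : IsOpen (qHalfPlane σ) :=
  isOpen_lt continuous_qParam.norm continuous_const

lemma add_real_mem_qHalfPlane (hw : w ∈ qHalfPlane σ) (t : ℝ) : w + t ∈ qHalfPlane σ := by
  simpa [qHalfPlane, norm_qParam] using hw

lemma add_intCast_mem_qHalfPlane (hw : w ∈ qHalfPlane σ) (m : ℤ) : w + m ∈ qHalfPlane σ := by
  exact_mod_cast add_real_mem_qHalfPlane hw m

lemma qHalfPlane_exp (A : ℝ) : qHalfPlane (Real.exp (-2 * Real.pi * A)) = {w | A < w.im} := by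
  ext w
  simpa only [qHalfPlane, mem_ofPred_eq, div_one] using norm_qParam_lt_iff one_pos A w

lemma exists_qHalfPlane_eq (hσ : 0 < σ) : ∃ A, qHalfPlane σ = {w | A < w.im} :=
  ⟨-Real.log σ / (2 * Real.pi), by
    rw [← qHalfPlane_exp]
    congr
    field_simp
    rw [Real.exp_log hσ]⟩

lemma convex_qHalfPlane (hσ : 0 < σ) : Convex ℝ (qHalfPlane σ) := by
  obtain ⟨A, hA⟩ := exists_qHalfPlane_eq hσ
  exact hA ▸ convex_halfSpace_im_gt A

lemma nonempty_qHalfPlane (hσ : 0 < σ) : (qHalfPlane σ).Nonempty := by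
  obtain ⟨A, hA⟩ := exists_qHalfPlane_eq hσ
  exact hA ▸ ⟨⟨0, A + 1⟩, lt_add_one A⟩

lemma qHalfPlane_mem_comap_im_atTop (hσ : 0 < σ) : qHalfPlane σ ∈ I∞ := by
  obtain ⟨A, hA⟩ := exists_qHalfPlane_eq hσ
  exact hA ▸ preimage_mem_comap (Ioi_mem_atTop A)

lemma exists_qHalfPlane_subset {S : Set ℂ} (hS : S ∈ I∞) : ∃ σ > 0, qHalfPlane σ ⊆ S := by
  obtain ⟨A, -, hA⟩ := (atTop_basis_Ioi.comap Complex.im).mem_iff.1 hS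
  exact ⟨_, Real.exp_pos _, (qHalfPlane_exp A).trans_subset hA⟩

lemma tendsto_qParam_comap_im_atTop : Tendsto (qParam 1) I∞ (𝓝 0) :=
  (qParam_tendsto one_pos).mono_right nhdsWithin_le_nhds

lemma qHalfPlane_mono {τ : ℝ} (h : σ ≤ τ) : qHalfPlane σ ⊆ qHalfPlane τ :=
  fun _ hw ↦ lt_of_lt_of_le hw h

lemma exists_qParam_eq {ε : ℂ} (hε : 0 < ‖ε‖) (hεσ : ‖ε‖ < σ) :
    ∃ w ∈ qHalfPlane σ, qParam 1 w = ε := by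
  have hright := qParam_right_inv one_ne_zero (norm_pos_iff.1 hε)
  exact ⟨_, by rwa [qHalfPlane, mem_ofPred_eq, hright], hright⟩

lemma pow_eq_qParam_iff {n : ℕ} (hn : 0 < n) {ζ : ℂ} :
    ζ ^ n = qParam 1 w ↔ ∃ m : ℤ, ζ = qParam n (w + m) := by
  have hnC : (n : ℂ) ≠ 0 := Nat.cast_ne_zero.2 hn.ne'
  have hnR : (n : ℝ) ≠ 0 := Nat.cast_ne_zero.2 hn.ne'
  have hpow (v : ℂ) : qParam n v ^ n = qParam 1 w ↔ ∃ m : ℤ, v = w + m := by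
    rw [qParam, qParam, ← Complex.exp_nat_mul, Complex.exp_eq_exp_iff_exists_int]
    refine exists_congr fun m ↦ ?_
    have := Complex.two_pi_I_ne_zero
    push_cast
    field_simp
  constructor
  · intro h
    have hζ : ζ ≠ 0 := by
      rintro rfl
      exact qParam_ne_zero w (by simpa [hn.ne'] using h.symm)
    obtain ⟨v, rfl⟩ : ∃ v, qParam n v = ζ := ⟨_, qParam_right_inv hnR hζ⟩
    exact ((hpow v).1 h).imp fun m ↦ congrArg (qParam n)
  · rintro ⟨m, rfl⟩
    exact (hpow _).2 ⟨m, rfl⟩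

lemma exists_analyticAt_qParam {f : ℂ → ℂ} {h : ℝ} (hh : 0 < h) (hσ : 0 < σ)
    (hper : ∀ w ∈ qHalfPlane σ, f (w + h) = f w)
    (hdiff : ∀ w ∈ qHalfPlane σ, DifferentiableAt ℂ f w) (hbd : BoundedAtFilter I∞ f) :
    ∃ g : ℂ → ℂ, AnalyticAt ℂ g 0 ∧ (∀ w ∈ qHalfPlane σ, g (qParam h w) = f w) ∧
      Tendsto f I∞ (𝓝 (g 0)) := by
  let F := (qHalfPlane σ).indicator f
  have hFf : EqOn F f (qHalfPlane σ) := eqOn_indicator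
  have hFper : Function.Periodic F h := fun w ↦ by
    by_cases hw : w ∈ qHalfPlane σ
    · rw [hFf hw, hFf (add_real_mem_qHalfPlane hw h), hper w hw]
    · have hwh : w + h ∉ qHalfPlane σ := fun hwh ↦
        hw (by simpa using add_real_mem_qHalfPlane hwh (-h))
      simp only [F, indicator_of_notMem hw, indicator_of_notMem hwh]
  have hmem := qHalfPlane_mem_comap_im_atTop hσ
  have hFev : F =ᶠ[I∞] f := hFf.eventuallyEq_of_mem hmem
  have hFdiff : ∀ᶠ w in I∞, DifferentiableAt ℂ F w := by
    filter_upwards [hmem] with w hw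
    exact (hdiff w hw).congr_of_eventuallyEq
      (hFf.eventuallyEq_of_mem (isOpen_qHalfPlane.mem_nhds hw))
  have hFbd : BoundedAtFilter I∞ F := hFev.trans_isBigO hbd
  refine ⟨cuspFunction h F, ?_, fun w hw ↦ ?_, ?_⟩
  · exact Complex.analyticAt_of_differentiable_on_punctured_nhds_of_continuousAt
      (eventually_differentiableAt_cuspFunction_nhds_ne_zero hh hFper hFdiff)
      (differentiableAt_cuspFunction_zero hh hFper hFdiff hFbd).continuousAt
  · rw [eq_cuspFunction hh.ne' hFper, hFf hw]
  · exact (tendsto_at_I_inf hh hFper hFdiff hFbd).congr' hFev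

end QParam

section Puiseux

namespace IsSheetsOn

variable {ι : Type*} [Finite ι] {Φ : ι → ℂ → ℂ} {R : ℂ → Set ℂ} {σ : ℝ}

lemma exists_perm_add_intCast (hΦ : IsSheetsOn Φ (R ∘ qParam 1) (qHalfPlane σ)) (hσ : 0 < σ) :
    ∃ π : Equiv.Perm ι, ∀ i (m : ℤ), ∀ w ∈ qHalfPlane σ, Φ i (w + m) = Φ ((π ^ m) i) w := by
  obtain ⟨π, hπ⟩ := hΦ.exists_perm (convex_qHalfPlane hσ).isPreconnected (nonempty_qHalfPlane hσ)
    (f := (· + 1)) (by fun_prop) (fun w hw ↦ by simpa using add_intCast_mem_qHalfPlane hw 1)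
    fun w _ ↦ congrArg R (by simp [qParam, mul_add, Complex.exp_add, Complex.exp_two_pi_mul_I])
  refine ⟨π, fun i m ↦ ?_⟩
  induction m using Int.induction_on generalizing i with
  | zero => simp
  | succ n ih =>
    intro w hw
    rw [zpow_add_one, Equiv.Perm.mul_apply, ← ih _ w hw,
      ← hπ i _ (add_intCast_mem_qHalfPlane hw n)]
    push_cast
    ring_nf
  | pred n ih =>
    intro w hw
    have hstep := hπ (π⁻¹ i) _ (add_intCast_mem_qHalfPlane hw (-n - 1))
    rw [← Equiv.Perm.mul_apply, mul_inv_cancel, Equiv.Perm.one_apply] at hstep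
    rw [zpow_sub_one, Equiv.Perm.mul_apply, ← ih _ w hw, ← hstep]
    push_cast
    ring_nf

lemma exists_tendsto_comap_im_atTop (hΦ : IsSheetsOn Φ (R ∘ qParam 1) (qHalfPlane σ)) (hσ : 0 < σ)
    (hdiff : ∀ i, ∀ w ∈ qHalfPlane σ, DifferentiableAt ℂ (Φ i) w)
    (hbd : ∀ i, BoundedAtFilter I∞ (Φ i)) (i : ι) : ∃ l, Tendsto (Φ i) I∞ (𝓝 l) := by
  obtain ⟨π, hπ⟩ := hΦ.exists_perm_add_intCast hσ
  have hper : ∀ w ∈ qHalfPlane σ, Φ i (w + (orderOf π : ℝ)) = Φ i w := fun w hw ↦ by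
    simpa [pow_orderOf_eq_one] using hπ i (orderOf π) w hw
  obtain ⟨g, -, -, hg⟩ := exists_analyticAt_qParam (Nat.cast_pos.2 (orderOf_pos π)) hσ hper
    (hdiff i) (hbd i)
  exact ⟨_, hg⟩

theorem exists_puiseux {c : ℂ} (hΦ : IsSheetsOn Φ (R ∘ qParam 1) (qHalfPlane σ)) (hσ : 0 < σ)
    (hdiff : ∀ i, ∀ w ∈ qHalfPlane σ, DifferentiableAt ℂ (Φ i) w)
    (hlim : ∀ i, Tendsto (Φ i) I∞ (𝓝 c)) :
    ∃ (r : ℕ) (H : Fin r → ℕ), (∀ i, 0 < H i) ∧ ∑ i, H i = Nat.card ι ∧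
      ∃ g : Fin r → ℂ → ℂ, (∀ i, AnalyticAt ℂ (g i) 0) ∧ (∀ i, g i 0 = c) ∧
        ∀ ε : ℂ, 0 < ‖ε‖ → ‖ε‖ < σ → R ε = ⋃ i, g i '' {ζ | ζ ^ H i = ε} := by
  obtain ⟨π, hπ⟩ := hΦ.exists_perm_add_intCast hσ
  obtain ⟨r, rep, H, hHpos, hHsum, hHrep, hrep⟩ := exists_cycle_representatives π
  have hper i : ∀ w ∈ qHalfPlane σ, Φ (rep i) (w + (H i : ℝ)) = Φ (rep i) w := fun w hw ↦ by
    simpa [hHrep] using hπ (rep i) (H i) w hw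
  choose g hg hgΦ hg0 using fun i ↦ exists_analyticAt_qParam (Nat.cast_pos.2 (hHpos i)) hσ (hper i)
    (hdiff _) ((hlim (rep i)).isBigO_one ℝ)
  have : (I∞).NeBot := atTop_neBot.comap_of_surj Complex.im_surjective
  refine ⟨r, H, hHpos, hHsum, g, hg, fun i ↦ tendsto_nhds_unique (hg0 i) (hlim _), ?_⟩
  intro ε hε hεσ
  obtain ⟨w, hw, rfl⟩ := exists_qParam_eq hε hεσ
  have hgw i (m : ℤ) : g i (qParam (H i) (w + m)) = Φ ((π ^ m) (rep i)) w :=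
    (hgΦ i _ (add_intCast_mem_qHalfPlane hw m)).trans (hπ _ m w hw)
  ext z
  simp only [mem_iUnion, mem_image, mem_ofPred_eq, pow_eq_qParam_iff (hHpos _)]
  constructor
  · intro hz
    obtain ⟨k, rfl⟩ := hΦ.exists_apply_eq hw hz
    obtain ⟨i, m, rfl⟩ := hrep k
    exact ⟨i, _, ⟨m, rfl⟩, hgw i m⟩
  · rintro ⟨i, _, ⟨m, rfl⟩, rfl⟩
    exact hgw i m ▸ hΦ.apply_mem hw _

end IsSheetsOn

end Puiseux

lemma exists_dist_lt_iff_eq {α ι Y : Type*} [Finite ι] [MetricSpace Y] {l : Filter α}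
    {Φ : ι → α → Y} {c : ι → Y} (hc : ∀ k, Tendsto (Φ k) l (𝓝 (c k))) (y : Y) :
    ∃ δ > 0, ∀ᶠ x in l, ∀ k, dist (Φ k x) y < δ ↔ c k = y := by
  have hsmall : ∀ᶠ δ in 𝓝[>] (0 : ℝ), ∀ k, c k ≠ y → δ < dist (c k) y :=
    eventually_all.2 fun k ↦ eventually_imp_distrib_left.2 fun hk ↦
      nhdsWithin_le_nhds (eventually_lt_nhds (dist_pos.2 hk))
  obtain ⟨δ, hδ, hδ0⟩ := (hsmall.and self_mem_nhdsWithin).exists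
  refine ⟨δ, hδ0, eventually_all.2 fun k ↦ ?_⟩
  have hdist : Tendsto (fun x ↦ dist (Φ k x) y) l (𝓝 (dist (c k) y)) :=
    (hc k).dist tendsto_const_nhds
  by_cases hk : c k = y
  · filter_upwards [hdist.eventually_lt_const (by simpa [hk] using hδ0)] with x hx
    exact iff_of_true hx hk
  · filter_upwards [hdist.eventually_const_lt (hδ k hk)] with x hx
    exact iff_of_false hx.not_gt hk

namespace IsAnalyticFamilyAt

variable {P : ℂ → ℂ[X]} {d : ℕ} {σ : ℝ}

lemma exists_tendsto_sheets {Φ : Fin d → ℂ → ℂ} (hP : IsAnalyticFamilyAt P d 0) (hσ : 0 < σ)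
    (hΦ : IsSheetsOn Φ ((fun ε ↦ {z | (P ε).IsRoot z}) ∘ qParam 1) (qHalfPlane σ))
    (hdiff : ∀ k, ∀ w ∈ qHalfPlane σ, DifferentiableAt ℂ (Φ k) w) :
    ∃ c : Fin d → ℂ, (∀ k, Tendsto (Φ k) I∞ (𝓝 (c k))) ∧
      (P 0).roots = Finset.univ.val.map c := by
  have hmem := qHalfPlane_mem_comap_im_atTop hσ
  have hbd k : BoundedAtFilter I∞ (Φ k) := by
    obtain ⟨B, hB⟩ := hP.exists_norm_root_le
    refine .of_bound B ?_
    filter_upwards [hmem, tendsto_qParam_comap_im_atTop.eventually hB] with w hw hwB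
    simpa using hwB _ (hΦ.apply_mem hw k)
  choose c hc using hΦ.exists_tendsto_comap_im_atTop hσ hdiff hbd
  have : (I∞).NeBot := atTop_neBot.comap_of_surj Complex.im_surjective
  refine ⟨c, hc, hP.roots_eq_of_tendsto tendsto_qParam_comap_im_atTop ?_ hc⟩
  filter_upwards [hmem, tendsto_qParam_comap_im_atTop.eventually hP.eventually_degree_eq]
    with w hw hdeg
  exact roots_eq_map_of_injective (hΦ.injective w hw) (hΦ.apply_mem hw) (by simpa using hdeg)

lemma exists_sheets_qHalfPlane (hP : IsAnalyticFamilyAt P d 0) {σ₀ : ℝ} (hσ₀ : 0 < σ₀)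
    (hsep : ∀ ε, 0 < ‖ε‖ → ‖ε‖ < σ₀ → (P ε).Separable) :
    ∃ σ, 0 < σ ∧ σ ≤ σ₀ ∧ ∃ Φ : Fin d → ℂ → ℂ,
      IsSheetsOn Φ ((fun ε ↦ {z | (P ε).IsRoot z}) ∘ qParam 1) (qHalfPlane σ) ∧
        ∀ k, ∀ w ∈ qHalfPlane σ, DifferentiableAt ℂ (Φ k) w := by
  obtain ⟨τ, hτ, hfam⟩ := Metric.eventually_nhds_iff.1 hP.eventually
  have hσ : 0 < min τ σ₀ := lt_min hτ hσ₀
  have : ContractibleSpace (qHalfPlane (min τ σ₀)) :=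
    (convex_qHalfPlane hσ).contractibleSpace (nonempty_qHalfPlane hσ)
  have hq : AnalyticOnNhd ℂ (qParam 1) univ :=
    Complex.analyticOnNhd_univ_iff_differentiable.2 differentiable_qParam
  refine ⟨_, hσ, min_le_right _ _, exists_differentiable_sheets isOpen_qHalfPlane
    (fun w hw ↦ (hfam ?_).comp (hq w trivial)) fun w hw ↦ hsep _ (norm_pos_iff.2 (qParam_ne_zero w))
      (hw.trans_le (min_le_right _ _))⟩
  rw [dist_zero_right]
  exact hw.trans_le (min_le_left _ _)

lemma exists_sheets_near_root (hP : IsAnalyticFamilyAt P d 0) {σ₀ : ℝ} (hσ₀ : 0 < σ₀)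
    (hsep : ∀ ε, 0 < ‖ε‖ → ‖ε‖ < σ₀ → (P ε).Separable) (c : ℂ) :
    ∃ δ > 0, ∃ σ, 0 < σ ∧ σ ≤ σ₀ ∧ ∃ J : Finset (Fin d), J.card = (P 0).rootMultiplicity c ∧
      ∃ Φ : J → ℂ → ℂ,
        IsSheetsOn Φ ((fun ε ↦ {z | (P ε).IsRoot z ∧ ‖z - c‖ < δ}) ∘ qParam 1) (qHalfPlane σ) ∧
        (∀ k, ∀ w ∈ qHalfPlane σ, DifferentiableAt ℂ (Φ k) w) ∧
        ∀ k, Tendsto (Φ k) I∞ (𝓝 c) := by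
  classical
  obtain ⟨τ, hτ, hτσ₀, Φ, hΦ, hdiff⟩ := hP.exists_sheets_qHalfPlane hσ₀ hsep
  obtain ⟨l, hl, hroots⟩ := hP.exists_tendsto_sheets hτ hΦ hdiff
  obtain ⟨δ, hδ, hnear⟩ := exists_dist_lt_iff_eq hl c
  obtain ⟨ρ, hρ, hρnear⟩ := exists_qHalfPlane_subset hnear
  let J : Finset (Fin d) := {k | l k = c}
  have hJ : ∀ k, k ∈ J ↔ l k = c := by simp [J]
  have hτmem := qHalfPlane_mono (min_le_left τ ρ)
  refine ⟨δ, hδ, min τ ρ, lt_min hτ hρ, (min_le_left _ _).trans hτσ₀, J, ?_, fun k ↦ Φ k, ?_,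
    fun k w hw ↦ hdiff k w (hτmem hw), fun k ↦ (hJ k).1 k.2 ▸ hl k⟩
  · rw [← count_roots, hroots, Multiset.count_map]
    simp only [J, eq_comm]
    rfl
  · refine (hΦ.mono hτmem).subtype fun w hw k ↦ ?_
    rw [← dist_eq_norm, hJ]
    exact hρnear (qHalfPlane_mono (min_le_right τ ρ) hw) k

end IsAnalyticFamilyAt

theorem stmt9_general (d : ℕ) (P : ℂ → ℂ[X]) (hP : IsAnalyticFamilyAt P d 0)
    (l₀ : ℂ) (s : ℕ) (hs : (P 0).rootMultiplicity l₀ = s) (hs0 : 0 < s)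
    (σ₀ : ℝ) (hσ₀ : 0 < σ₀)
    (hsimple : ∀ ε : ℂ, 0 < ‖ε‖ → ‖ε‖ < σ₀ → ∀ z : ℂ, (P ε).IsRoot z →
        ¬(derivative (P ε)).IsRoot z) :
    ∃ δ > (0 : ℝ), ∃ σ : ℝ, 0 < σ ∧ σ ≤ σ₀ ∧ ∃ r : ℕ, 1 ≤ r ∧ ∃ H : Fin r → ℕ,
      (∀ i, 0 < H i) ∧ (∑ i, H i) = s ∧ ∃ g : Fin r → ℂ → ℂ,
      (∀ i, AnalyticAt ℂ (g i) 0) ∧ (∀ i, g i 0 = l₀) ∧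
      ∀ ε : ℂ, 0 < ‖ε‖ → ‖ε‖ < σ →
        ({z : ℂ | (P ε).IsRoot z ∧ ‖z - l₀‖ < δ}
            = ⋃ i, g i '' {ζ : ℂ | ζ ^ (H i) = ε}) ∧
        {z : ℂ | (P ε).IsRoot z ∧ ‖z - l₀‖ < δ}.ncard = s := by
  obtain ⟨δ, hδ, σ, hσ, hσσ₀, J, hJ, Φ, hΦ, hdiff, hlim⟩ := hP.exists_sheets_near_root hσ₀
    (fun ε hε hεσ ↦ separable_of_forall_isRoot (hsimple ε hε hεσ)) l₀
  obtain ⟨r, H, hHpos, hHsum, g, hg, hg0, hroots⟩ := hΦ.exists_puiseux hσ hdiff hlim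
  have hcard : Nat.card J = s := by rw [Nat.card_eq_fintype_card, Fintype.card_coe, hJ, hs]
  rw [hcard] at hHsum
  have hr : 1 ≤ r := by
    by_contra! hr
    obtain rfl := Nat.lt_one_iff.1 hr
    simp [← hHsum] at hs0
  refine ⟨δ, hδ, σ, hσ, hσσ₀, r, hr, H, hHpos, hHsum, g, hg, hg0,
    fun ε hε hεσ ↦ ⟨hroots ε hε hεσ, ?_⟩⟩
  obtain ⟨w, hw, rfl⟩ := exists_qParam_eq hε hεσ
  exact (hΦ.ncard_eq hw).trans hcard

/-- Theorem 3.4: near a zero `λ₀` of `P(·,0)` of multiplicity `s > 1`, the nearby roots of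
`P(·,ε)` are branches of `r` global analytic functions given by Puiseux series in
`ε^{1/H_i}`, with cycle lengths `H_i` summing to `s`. -/
theorem stmt9 (d : ℕ) (a : ℕ → Polynomial ℂ)
    (P : ℂ → Polynomial ℂ)
    (hP : ∀ ε : ℂ, P ε = ∑ j ∈ Finset.range (d + 1),
        Polynomial.C ((a j).eval ε) * Polynomial.X ^ j)
    (had : (a d).eval 0 ≠ 0)
    (l₀ : ℂ) (s : ℕ) (hs : (P 0).rootMultiplicity l₀ = s) (hs1 : 1 < s)
    (σ₀ : ℝ) (hσ₀ : 0 < σ₀)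
    (hsimple : ∀ ε : ℂ, 0 < ‖ε‖ → ‖ε‖ < σ₀ → ∀ z : ℂ, (P ε).IsRoot z →
        ¬(Polynomial.derivative (P ε)).IsRoot z) :
    ∃ δ > (0 : ℝ), ∃ σ : ℝ, 0 < σ ∧ σ ≤ σ₀ ∧ ∃ r : ℕ, 1 ≤ r ∧ ∃ H : Fin r → ℕ,
      (∀ i, 0 < H i) ∧ (∑ i, H i) = s ∧ ∃ g : Fin r → ℂ → ℂ,
      (∀ i, AnalyticAt ℂ (g i) 0) ∧ (∀ i, g i 0 = l₀) ∧
      ∀ ε : ℂ, 0 < ‖ε‖ → ‖ε‖ < σ →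
        ({z : ℂ | (P ε).IsRoot z ∧ ‖z - l₀‖ < δ}
            = ⋃ i, g i '' {ζ : ℂ | ζ ^ (H i) = ε}) ∧
        {z : ℂ | (P ε).IsRoot z ∧ ‖z - l₀‖ < δ}.ncard = s :=
  stmt9_general d P
    (.of_eq_sum hP (fun j _ ↦ AnalyticAt.aeval_polynomial analyticAt_id (a j)) had) l₀ s hs
    (by omega) σ₀ hσ₀ hsimple
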